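/- arXiv:1301.0656 — 6 statements merged into one kernel-verified Lean document; each statement's English description precedes it below -/
import Mathlib

section
/- Let n ≥ 1 be an integer and let α, β, k be integers with 0 ≤ α, β ≤ n−1. Suppose α > β and α + β ≥ n, and set γ = α + β − n + 1. Then N_{(α,β)}^k = γ+1 for 0 ≤ k ≤ γ; N_{(α,β)}^k = k+1 for γ ≤ k ≤ β; N_{(α,β)}^k = β+1 for β ≤ k ≤ α; and N_{(α,β)}^k = α+β+1−k for α ≤ k ≤ n−1. -/
/-- `Ncard n α β k` is the cardinality of
`{(x,y) ∈ ℤ×ℤ : 0 ≤ x ≤ α, 0 ≤ y ≤ β, x + y ≡ k (mod n)}`. -/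
noncomputable def Ncard (n α β k : ℤ) : ℕ :=
  Set.ncard {p : ℤ × ℤ | 0 ≤ p.1 ∧ p.1 ≤ α ∧ 0 ≤ p.2 ∧ p.2 ≤ β ∧ p.1 + p.2 ≡ k [ZMOD n]}

/-! Since `0 ≤ x + y < 2 * n`, the congruence `x + y ≡ k (mod n)` means that `x + y` is `k` or
`k + n`, so the count is the number of lattice points of the box `[0, α] × [0, β]` on two
antidiagonals. As a function of `s`, the number of points on `x + y = s` is a trapezoid: it climbs
to `β + 1` at `s = β`, stays there up to `s = α`, and descends to `0` at `s = α + β + 1`. The second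
antidiagonal meets the box only for `k < γ`, where its `γ - k` points, on the descending side,
complete the `k + 1` points of the first one to `γ + 1`. -/

/-- The lattice points of the box `[0, α] × [0, β]` on the antidiagonal `x + y = s`; the congruence
condition in `Ncard` is split into such antidiagonals. -/
def boxAntidiagonal (α β s : ℤ) : Set (ℤ × ℤ) :=
  {p | 0 ≤ p.1 ∧ p.1 ≤ α ∧ 0 ≤ p.2 ∧ p.2 ≤ β ∧ p.1 + p.2 = s}

section boxAntidiagonal

variable {α β s t : ℤ}

theorem boxAntidiagonal_eq_image (α β s : ℤ) :
    boxAntidiagonal α β s = (fun y ↦ (s - y, y)) '' Set.Icc (max 0 (s - α)) (min β s) := by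
  ext ⟨x, y⟩
  simp only [boxAntidiagonal, Set.mem_ofPred_eq, Set.mem_image, Set.mem_Icc, Prod.mk.injEq]
  constructor
  · rintro ⟨hx, hxα, hy, hyβ, hs⟩
    exact ⟨y, by omega, by omega, rfl⟩
  · rintro ⟨y, hy, rfl, rfl⟩
    omega

theorem finite_boxAntidiagonal (α β s : ℤ) : (boxAntidiagonal α β s).Finite := by
  rw [boxAntidiagonal_eq_image]
  exact (Set.finite_Icc _ _).image _

theorem disjoint_boxAntidiagonal (hst : s ≠ t) :
    Disjoint (boxAntidiagonal α β s) (boxAntidiagonal α β t) :=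
  Set.disjoint_left.2 fun _ ⟨_, _, _, _, hs⟩ ⟨_, _, _, _, ht⟩ ↦ hst (hs.symm.trans ht)

theorem ncard_boxAntidiagonal (α β s : ℤ) :
    (boxAntidiagonal α β s).ncard = (min β s + 1 - max 0 (s - α)).toNat := by
  have snd_injective : Function.Injective fun y : ℤ ↦ (s - y, y) :=
    fun _ _ h ↦ congrArg Prod.snd h
  rw [boxAntidiagonal_eq_image, Set.ncard_image_of_injective _ snd_injective,
    ← Finset.coe_Icc, Set.ncard_coe_finset, Int.card_Icc]

theorem ncard_boxAntidiagonal_of_le_left_of_le_right (hs : -1 ≤ s) (hsα : s ≤ α) (hsβ : s ≤ β) :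
    ((boxAntidiagonal α β s).ncard : ℤ) = s + 1 := by
  rw [ncard_boxAntidiagonal]
  omega

theorem ncard_boxAntidiagonal_of_right_le_of_le_left (hβ : -1 ≤ β) (hβs : β ≤ s) (hsα : s ≤ α) :
    ((boxAntidiagonal α β s).ncard : ℤ) = β + 1 := by
  rw [ncard_boxAntidiagonal]
  omega

theorem ncard_boxAntidiagonal_of_left_le_of_right_le (hαs : α ≤ s) (hβs : β ≤ s)
    (hs : s ≤ α + β + 1) : ((boxAntidiagonal α β s).ncard : ℤ) = α + β + 1 - s := by
  rw [ncard_boxAntidiagonal]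
  omega

theorem boxAntidiagonal_eq_empty (hs : α + β < s) : boxAntidiagonal α β s = ∅ :=
  Set.eq_empty_of_forall_notMem fun _ ⟨_, _, _, _, _⟩ ↦ by omega

end boxAntidiagonal

section Ncard

variable {n α β k : ℤ}

theorem intModEq_iff_eq_or_eq_add {m : ℤ} (hlt : k - n < m) (hgt : m < k + 2 * n) :
    m ≡ k [ZMOD n] ↔ m = k ∨ m = k + n := by
  constructor
  · intro h
    obtain ⟨c, hc⟩ := h.symm.dvd
    have hn : 0 < n := by omega
    have hc_gt : -1 < c := lt_of_mul_lt_mul_left (by omega : n * -1 < n * c) hn.le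
    have hc_lt : c < 2 := lt_of_mul_lt_mul_left (by omega : n * c < n * 2) hn.le
    obtain rfl | rfl : c = 0 ∨ c = 1 := by omega
    all_goals omega
  · rintro (rfl | rfl)
    · rfl
    · exact Int.add_modEq_right

theorem Ncard_eq_ncard_boxAntidiagonal_add (hn : 0 < n) (hk : k < n) (hαβ : α + β < k + 2 * n) :
    Ncard n α β k =
      (boxAntidiagonal α β k).ncard + (boxAntidiagonal α β (k + n)).ncard := by
  have union_eq : {p : ℤ × ℤ | 0 ≤ p.1 ∧ p.1 ≤ α ∧ 0 ≤ p.2 ∧ p.2 ≤ β ∧ p.1 + p.2 ≡ k [ZMOD n]} =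
      boxAntidiagonal α β k ∪ boxAntidiagonal α β (k + n) := by
    ext ⟨x, y⟩
    simp only [boxAntidiagonal, Set.mem_union, Set.mem_ofPred_eq, ← and_or_left]
    refine and_congr_right fun hx ↦ and_congr_right fun hxα ↦ and_congr_right fun hy ↦
      and_congr_right fun hyβ ↦ intModEq_iff_eq_or_eq_add ?_ ?_ <;> omega
  rw [Ncard, union_eq, Set.ncard_union_eq (disjoint_boxAntidiagonal (by omega))
    (finite_boxAntidiagonal α β k) (finite_boxAntidiagonal α β (k + n))]

theorem Ncard_eq_ncard_boxAntidiagonal (hn : 0 < n) (hk : k < n) (hαβ : α + β < k + n) :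
    Ncard n α β k = (boxAntidiagonal α β k).ncard := by
  rw [Ncard_eq_ncard_boxAntidiagonal_add hn hk (by omega), boxAntidiagonal_eq_empty hαβ,
    Set.ncard_empty, add_zero]

end Ncard

theorem stmt3 (n α β k γ : ℤ) (hn : 1 ≤ n)
    (hα0 : 0 ≤ α) (hα : α ≤ n - 1) (hβ0 : 0 ≤ β) (hβ : β ≤ n - 1)
    (hαβ : β < α) (hsum : n ≤ α + β) (hγ : γ = α + β - n + 1) :
    (0 ≤ k → k ≤ γ → (Ncard n α β k : ℤ) = γ + 1) ∧
    (γ ≤ k → k ≤ β → (Ncard n α β k : ℤ) = k + 1) ∧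
    (β ≤ k → k ≤ α → (Ncard n α β k : ℤ) = β + 1) ∧
    (α ≤ k → k ≤ n - 1 → (Ncard n α β k : ℤ) = α + β + 1 - k) := by
  refine ⟨fun hk0 hkγ ↦ ?_, fun hγk hkβ ↦ ?_, fun hβk hkα ↦ ?_, fun hαk hkn ↦ ?_⟩
  · rw [Ncard_eq_ncard_boxAntidiagonal_add (by omega) (by omega) (by omega), Nat.cast_add,
      ncard_boxAntidiagonal_of_le_left_of_le_right (by omega) (by omega) (by omega),
      ncard_boxAntidiagonal_of_left_le_of_right_le (by omega) (by omega) (by omega)]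
    omega
  · rw [Ncard_eq_ncard_boxAntidiagonal (by omega) (by omega) (by omega)]
    exact ncard_boxAntidiagonal_of_le_left_of_le_right (by omega) (by omega) hkβ
  · rw [Ncard_eq_ncard_boxAntidiagonal (by omega) (by omega) (by omega)]
    exact ncard_boxAntidiagonal_of_right_le_of_le_left (by omega) hβk hkα
  · rw [Ncard_eq_ncard_boxAntidiagonal (by omega) (by omega) (by omega)]
    exact ncard_boxAntidiagonal_of_left_le_of_right_le hαk (by omega) (by omega)
end

section
/- Let n ≥ 1 be an integer, let e, f ≥ 0 be integers, write e' = e mod n and f' = f mod n, and let 0 ≤ i ≤ n−1. Then the cardinality of the set {(k,l) ∈ ℤ×ℤ : 0 ≤ k ≤ e, 0 ≤ l ≤ f, and k + l ≡ i (mod n)} equals (e·f − e'·f')/n + (e + f − e' − f')/n + N_{(e',f')}^i (both displayed fractions are integers). -/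
/-!
A residue class is hit exactly once by each block of `n` consecutive integers. Hence `n` times the
number of its elements in an interval, minus the length of the interval, depends only on the
endpoints modulo `n`. Applied to the rows of a rectangle, and by symmetry to its columns, this shows
that `n * Ncard n e f i - (e + 1) * (f + 1)` depends only on `e` and `f` modulo `n`.
-/

theorem ceil_sub_div_eq_add_of_sub_eq_mul {K : Type*} [Field K] [LinearOrder K]
    [IsStrictOrderedRing K] [FloorRing K] {n b b' c : ℤ} (hn : n ≠ 0) (h : b - b' = n * c) (v : K) :
    ⌈(b - v) / n⌉ = ⌈(b' - v) / n⌉ + c := by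
  have hb : (b : K) = b' + n * c := by exact_mod_cast eq_add_of_sub_eq' h
  rw [← Int.ceil_add_intCast, hb]
  congr 1
  field_simp
  ring

theorem mul_card_Ico_filter_modEq_sub {n a b b' : ℤ} (hn : 0 < n) (hb : a ≤ b) (hb' : a ≤ b')
    (h : b ≡ b' [ZMOD n]) (v : ℤ) :
    n * ((Finset.Ico a b).filter (· ≡ v [ZMOD n])).card -
      n * ((Finset.Ico a b').filter (· ≡ v [ZMOD n])).card = b - b' := by
  obtain ⟨c, hc⟩ := h.symm.dvd
  have ceil_mono {d : ℤ} (hd : a ≤ d) : ⌈(a - v : ℚ) / n⌉ ≤ ⌈(d - v : ℚ) / n⌉ := by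
    gcongr
  rw [Int.Ico_filter_modEq_card _ _ hn, Int.Ico_filter_modEq_card _ _ hn,
    max_eq_left (sub_nonneg.2 (ceil_mono hb)), max_eq_left (sub_nonneg.2 (ceil_mono hb')),
    ceil_sub_div_eq_add_of_sub_eq_mul hn.ne' hc, hc]
  ring

theorem Ncard_comm (n α β k : ℤ) : Ncard n α β k = Ncard n β α k := by
  rw [Ncard, Ncard, ← Set.ncard_image_of_injective _ Prod.swap_injective,
    Set.image_swap_eq_preimage_swap]
  congr 1
  ext ⟨x, y⟩
  simp only [Set.mem_preimage, Set.mem_ofPred_eq, Prod.fst_swap, Prod.snd_swap, add_comm y x]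
  tauto

theorem Ncard_eq_sum_card (n α β k : ℤ) :
    Ncard n α β k = ∑ y ∈ Finset.Icc 0 β,
      ((Finset.Ico 0 (α + 1)).filter (· ≡ k - y [ZMOD n])).card := by
  have modEq_sub_iff (x y : ℤ) : x ≡ k - y [ZMOD n] ↔ x + y ≡ k [ZMOD n] := by
    rw [Int.modEq_iff_dvd, Int.modEq_iff_dvd, sub_sub, add_comm]
  have coe_filter : {p : ℤ × ℤ | 0 ≤ p.1 ∧ p.1 ≤ α ∧ 0 ≤ p.2 ∧ p.2 ≤ β ∧ p.1 + p.2 ≡ k [ZMOD n]} =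
      ((Finset.Ico 0 (α + 1) ×ˢ Finset.Icc 0 β).filter fun p ↦ p.1 + p.2 ≡ k [ZMOD n]) := by
    ext p
    simp only [Set.mem_ofPred_eq, Finset.coe_filter, Finset.mem_product, Finset.mem_Ico,
      Finset.mem_Icc, Int.lt_add_one_iff, and_assoc]
  simp only [Ncard, coe_filter, Set.ncard_coe_finset, Finset.card_filter,
    Finset.sum_product_right, modEq_sub_iff]

theorem mul_Ncard_sub_mul_Ncard_left {n e e' f : ℤ} (hn : 0 < n) (he : -1 ≤ e) (he' : -1 ≤ e')
    (hf : -1 ≤ f) (h : e ≡ e' [ZMOD n]) (i : ℤ) :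
    n * Ncard n e f i - n * Ncard n e' f i = (e - e') * (f + 1) := by
  have row (y : ℤ) := mul_card_Ico_filter_modEq_sub hn (by lia : 0 ≤ e + 1) (by lia : 0 ≤ e' + 1)
    (h.add_right 1) (i - y)
  have length : ((f + 1 - 0).toNat : ℤ) = f + 1 := by lia
  simp only [Ncard_eq_sum_card, Nat.cast_sum, Finset.mul_sum, ← Finset.sum_sub_distrib, row,
    Finset.sum_const, Int.card_Icc, nsmul_eq_mul, length]
  ring

theorem mul_Ncard_sub_mul_Ncard {n e f e' f' : ℤ} (hn : 0 < n) (he : -1 ≤ e) (hf : -1 ≤ f)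
    (he' : -1 ≤ e') (hf' : -1 ≤ f') (hee' : e ≡ e' [ZMOD n]) (hff' : f ≡ f' [ZMOD n]) (i : ℤ) :
    n * Ncard n e f i - n * Ncard n e' f' i = (e + 1) * (f + 1) - (e' + 1) * (f' + 1) := by
  have change_e := mul_Ncard_sub_mul_Ncard_left hn he he' hf hee' i
  have change_f := mul_Ncard_sub_mul_Ncard_left hn hf hf' he' hff' i
  rw [Ncard_comm n f, Ncard_comm n f'] at change_f
  linear_combination change_e + change_f

theorem stmt4_general {n e f e' f' : ℤ} (hn : 0 < n) (he : -1 ≤ e) (hf : -1 ≤ f)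
    (he' : -1 ≤ e') (hf' : -1 ≤ f') (hee' : e ≡ e' [ZMOD n]) (hff' : f ≡ f' [ZMOD n]) (i : ℤ) :
    n ∣ (e * f - e' * f') ∧ n ∣ (e + f - e' - f') ∧
      (Ncard n e f i : ℤ) =
        (e * f - e' * f') / n + (e + f - e' - f') / n + (Ncard n e' f' i : ℤ) := by
  have dvd_sub_mul : n ∣ e * f - e' * f' := (hee'.mul hff').symm.dvd
  have dvd_sub_add : n ∣ e + f - e' - f' := by
    simpa only [sub_sub] using (hee'.add hff').symm.dvd
  refine ⟨dvd_sub_mul, dvd_sub_add, mul_left_cancel₀ hn.ne' ?_⟩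
  rw [mul_add, mul_add, Int.mul_ediv_cancel' dvd_sub_mul, Int.mul_ediv_cancel' dvd_sub_add]
  linear_combination mul_Ncard_sub_mul_Ncard hn he hf he' hf' hee' hff' i

theorem stmt4 (n e f e' f' i : ℤ) (hn : 1 ≤ n)
    (he : 0 ≤ e) (hf : 0 ≤ f) (he' : e' = e % n) (hf' : f' = f % n)
    (hi0 : 0 ≤ i) (hi : i ≤ n - 1) :
    n ∣ (e * f - e' * f') ∧ n ∣ (e + f - e' - f') ∧
      (Ncard n e f i : ℤ) =
        (e * f - e' * f') / n + (e + f - e' - f') / n + (Ncard n e' f' i : ℤ) := by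
  have neg_one_le_emod (a : ℤ) : -1 ≤ a % n :=
    neg_one_lt_zero.le.trans (Int.emod_nonneg a (by lia))
  subst he' hf'
  exact stmt4_general hn (by lia) (by lia) (neg_one_le_emod e) (neg_one_le_emod f)
    (Int.mod_modEq e n).symm (Int.mod_modEq f n).symm i
end

section
/- Let n ≥ 2, let 𝕢 ∈ ℂ be a primitive n-th root of unity, let 0 ≤ s ≤ n−1 be an integer, and let q ∈ ℂ satisfy q^n = 𝕢^s. Let d be the multiplicative order of q and let e, f be integers with 0 ≤ e ≤ f ≤ d−1. Let V be the complex vector space with basis {v_x ⊗ v_y : 0 ≤ x ≤ e, 0 ≤ y ≤ f}, and let T : V → V be the linear map defined by T(v_x ⊗ v_y) = 𝕢^{−sy} q^{−y} · v_{x+1} ⊗ v_y + c(x,y) · v_x ⊗ v_{y+1}, where the first summand is omitted when x = e and the second is omitted when y = f, and where c(x,y) = 𝕢^{sx} if y ≡ n−1 (mod n) and c(x,y) = 1 otherwise. For 0 ≤ i ≤ n−1 let V_i be the span of {v_x ⊗ v_y : x + y ≡ i (mod n)} and let V'_i = (ker T) ∩ V_i. Then dim V'_i equals the cardinality of the set {j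 ∈ ℤ : f−e ≤ j ≤ f and e + j ≡ i (mod n)}. -/
/-!
Write a vector of `V` as a function on the grid `{0,…,e} × {0,…,f}`. At a grid point `(x+1, y)` with
`y < f`, the equation `T v = 0` gives `v (x+1, y)` in terms of `v (x, y+1)`, because the coefficient
of `v_x ⊗ v_y ↦ v_x ⊗ v_{y+1}` is invertible; at `(0, y)` it forces `v (0, y) = 0`. So a kernel
vector is determined by its top row `y = f`, and each recursion step preserves `x + y`. Conversely,
a vector built by this recursion from an arbitrary top row vanishes where `x + y < f`. The equations
on the bottom row `y = 0` involve only points `(x, 0)` with `x < e ≤ f`, so they hold too. Hence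
restriction to the top row identifies `ker T ∩ V_i` with the functions supported on the `x`
satisfying `x + f ≡ i`, and `j = x + f - e` reindexes these `x`.
-/

open Module Submodule

section LinearAlgebra

variable {R : Type*} [Semiring R]

theorem finrank_map_eq_of_injOn {M N : Type*} [AddCommMonoid M] [AddCommMonoid N] [Module R M]
    [Module R N] {g : M →ₗ[R] N} {p : Submodule R M} (hg : Set.InjOn g p) :
    finrank R (p.map g) = finrank R p := by
  rw [← LinearMap.range_domRestrict]
  exact LinearMap.finrank_range_of_inj (Set.injOn_iff_injective.mp hg)

variable {ι : Type*} [DecidableEq ι] [Finite ι]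

theorem mem_span_single_one_image_iff {s : Set ι} {v : ι → R} :
    v ∈ span R ((Pi.single · (1 : R)) '' s) ↔ ∀ j ∉ s, v j = 0 := by
  have h := (Pi.basisFun R ι).mem_span_image (m := v) (s := s)
  simp only [funext (Pi.basisFun_apply R ι)] at h
  rw [h]
  simp only [Set.subset_def, Finset.mem_coe, Finsupp.mem_support_iff, Pi.basisFun_repr]
  exact forall_congr' fun j => not_imp_comm

theorem finrank_span_single_one_image [StrongRankCondition R] (s : Set ι) :
    finrank R (span R ((Pi.single · (1 : R)) '' s)) = s.ncard := by
  have hind : LinearIndepOn R (Pi.single · (1 : R)) s :=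
    (Pi.linearIndependent_single_one ι R).linearIndepOn s
  have := Fintype.ofFinite s
  have := nontrivial_of_invariantBasisNumber R
  rw [Set.image_eq_range, finrank_span_eq_card hind, ← Nat.card_eq_fintype_card,
    Nat.card_coe_set_eq]

end LinearAlgebra

section GridShift

variable {R : Type*} [CommRing R] {e f : ℕ}

/-- The operator `v_x ⊗ v_y ↦ α x y • v_{x+1} ⊗ v_y + β x y • v_x ⊗ v_{y+1}`, where
`v_{e+1} = v_{f+1} = 0`, in coordinates with respect to the basis `v_x ⊗ v_y`. -/
def gridShift (α β : Fin (e + 1) → Fin (f + 1) → R) :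
    (Fin (e + 1) × Fin (f + 1) → R) →ₗ[R] (Fin (e + 1) × Fin (f + 1) → R) where
  toFun v p :=
    Matrix.vecCons 0 (fun x : Fin e => α x.castSucc p.2 * v (x.castSucc, p.2)) p.1 +
      Matrix.vecCons 0 (fun y : Fin f => β p.1 y.castSucc * v (p.1, y.castSucc)) p.2
  map_add' v w := by
    ext ⟨a, b⟩
    cases a using Fin.cases <;> cases b using Fin.cases <;> simp [mul_add, add_add_add_comm]
  map_smul' r v := by
    ext ⟨a, b⟩
    cases a using Fin.cases <;> cases b using Fin.cases <;> simp [mul_add, mul_left_comm]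

theorem gridShift_single (α β : Fin (e + 1) → Fin (f + 1) → R) (x : Fin (e + 1))
    (y : Fin (f + 1)) :
    gridShift α β (Pi.single (x, y) 1) =
      (if hx : (x : ℕ) < e then
        α x y • (Pi.single ((⟨(x : ℕ) + 1, by omega⟩ : Fin (e + 1)), y) (1 : R) :
          (Fin (e + 1) × Fin (f + 1)) → R)
      else 0) +
      (if hy : (y : ℕ) < f then
        β x y • (Pi.single (x, (⟨(y : ℕ) + 1, by omega⟩ : Fin (f + 1))) (1 : R) :
          (Fin (e + 1) × Fin (f + 1)) → R)
      else 0) := by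
  ext ⟨a, b⟩
  simp only [gridShift, LinearMap.coe_mk, AddHom.coe_mk, Pi.add_apply, dite_apply, Pi.smul_apply,
    smul_eq_mul, Pi.zero_apply]
  congr 1
  · cases x using Fin.lastCases <;> cases a using Fin.cases <;>
      simp only [Matrix.cons_val_zero, Matrix.cons_val_succ, Pi.single_apply, Prod.mk.injEq,
        Fin.ext_iff, Fin.val_zero, Fin.val_succ, Fin.val_castSucc, Fin.val_last] <;>
      grind [Fin.ext_iff]
  · cases y using Fin.lastCases <;> cases b using Fin.cases <;>
      simp only [Matrix.cons_val_zero, Matrix.cons_val_succ, Pi.single_apply, Prod.mk.injEq,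
        Fin.ext_iff, Fin.val_zero, Fin.val_succ, Fin.val_castSucc, Fin.val_last] <;>
      grind [Fin.ext_iff]

/-- The row at height `y` of a kernel vector of `gridShift α β`, as a function of its row `r` at
height `y + 1`. The values of `β` are meant to be units: `Ring.inverse` is `0` elsewhere. -/
noncomputable def rowBelow (α β : Fin (e + 1) → Fin (f + 1) → R) (y : Fin f)
    (r : Fin (e + 1) → R) : Fin (e + 1) → R :=
  Matrix.vecCons 0 fun x =>
    -(Ring.inverse (β x.succ y.castSucc) * (α x.castSucc y.succ * r x.castSucc))

/-- The recursion satisfied by kernel vectors of `gridShift α β`: every row but the top one is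
obtained by `rowBelow` from the row above it. -/
def IsRowRecursive (α β : Fin (e + 1) → Fin (f + 1) → R)
    (v : Fin (e + 1) × Fin (f + 1) → R) : Prop :=
  ∀ y : Fin f, (fun x => v (x, y.castSucc)) = rowBelow α β y fun x => v (x, y.succ)

/-- The solution of the recursion `IsRowRecursive α β` with top row `u`. -/
noncomputable def extendTopRow (α β : Fin (e + 1) → Fin (f + 1) → R) (u : Fin (e + 1) → R) :
    Fin (e + 1) × Fin (f + 1) → R :=
  fun p => Fin.reverseInduction (motive := fun _ => Fin (e + 1) → R) u (rowBelow α β) p.2 p.1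

/-- The restriction of a function on the grid to the row at height `f`. -/
def topRow : (Fin (e + 1) × Fin (f + 1) → R) →ₗ[R] (Fin (e + 1) → R) :=
  LinearMap.funLeft R R (·, Fin.last f)

variable {α β : Fin (e + 1) → Fin (f + 1) → R}

theorem topRow_extendTopRow (u : Fin (e + 1) → R) : topRow (extendTopRow α β u) = u := by
  ext x
  simp [topRow, extendTopRow]

theorem isRowRecursive_extendTopRow (u : Fin (e + 1) → R) :
    IsRowRecursive α β (extendTopRow α β u) := by
  intro y
  simp only [extendTopRow, Fin.reverseInduction_castSucc]

theorem IsRowRecursive.apply_eq_zero {v : Fin (e + 1) × Fin (f + 1) → R}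
    (hv : IsRowRecursive α β v) {D : Set ℕ}
    (htop : ∀ x : Fin (e + 1), (x + f : ℕ) ∉ D → topRow v x = 0)
    (x : Fin (e + 1)) (y : Fin (f + 1)) (hxy : (x + y : ℕ) ∉ D) : v (x, y) = 0 := by
  induction y using Fin.reverseInduction generalizing x with
  | last => exact htop x hxy
  | cast y ih =>
    rw [congrFun (hv y) x]
    cases x using Fin.cases with
    | zero => rfl
    | succ x =>
      have hdeg : (x.castSucc + y.succ : ℕ) = x.succ + y.castSucc := by
        simp only [Fin.val_castSucc, Fin.val_succ]
        omega
      simp [rowBelow, ih x.castSucc (hdeg ▸ hxy)]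

theorem gridShift_eq_zero_iff (hβ : ∀ x y, IsUnit (β x y))
    {v : Fin (e + 1) × Fin (f + 1) → R} :
    gridShift α β v = 0 ↔
      IsRowRecursive α β v ∧ ∀ x : Fin e, α x.castSucc 0 * v (x.castSucc, 0) = 0 := by
  have solve_zero (y : Fin f) : β 0 y.castSucc * v (0, y.castSucc) = 0 ↔ v (0, y.castSucc) = 0 :=
    (hβ 0 y.castSucc).mul_right_eq_zero
  have solve_succ (x : Fin e) (y : Fin f) :
      α x.castSucc y.succ * v (x.castSucc, y.succ) +
          β x.succ y.castSucc * v (x.succ, y.castSucc) = 0 ↔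
        v (x.succ, y.castSucc) =
          -(Ring.inverse (β x.succ y.castSucc) *
            (α x.castSucc y.succ * v (x.castSucc, y.succ))) := by
    rw [← neg_eq_iff_add_eq_zero, ← Ring.inverse_mul_eq_iff_eq_mul _ _ _ (hβ _ _), mul_neg,
      eq_comm]
  simp only [funext_iff, Prod.forall, Fin.forall_fin_succ, gridShift, IsRowRecursive, rowBelow,
    LinearMap.coe_mk, AddHom.coe_mk, Matrix.cons_val_zero, Matrix.cons_val_succ, Pi.zero_apply,
    zero_add, add_zero, true_and, solve_zero, solve_succ, forall_and]
  rw [forall_comm (α := Fin e) (β := Fin f)]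
  tauto

theorem mem_ker_gridShift_iff (hef : e ≤ f) (hβ : ∀ x y, IsUnit (β x y))
    {v : Fin (e + 1) × Fin (f + 1) → R} :
    v ∈ LinearMap.ker (gridShift α β) ↔ IsRowRecursive α β v := by
  rw [LinearMap.mem_ker, gridShift_eq_zero_iff hβ]
  refine and_iff_left_of_imp fun hv x => ?_
  have hx : (x.castSucc + (0 : Fin (f + 1)) : ℕ) ∉ Set.Ici f := by
    simp only [Set.mem_Ici, Fin.val_castSucc, Fin.val_zero]
    omega
  rw [hv.apply_eq_zero (fun x hx => absurd (Nat.le_add_left f x) hx) _ _ hx, mul_zero]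

theorem injOn_topRow_ker_gridShift (hef : e ≤ f) (hβ : ∀ x y, IsUnit (β x y)) :
    Set.InjOn topRow (LinearMap.ker (gridShift α β) : Set (Fin (e + 1) × Fin (f + 1) → R)) := by
  rw [← LinearMap.disjoint_ker_iff_injOn, LinearMap.disjoint_ker]
  intro v hv htop
  ext ⟨x, y⟩
  exact ((mem_ker_gridShift_iff hef hβ).mp hv).apply_eq_zero (D := ∅)
    (fun x _ => congrFun htop x) x y (Set.notMem_empty _)

theorem map_topRow_ker_gridShift_inf_span (hef : e ≤ f) (hβ : ∀ x y, IsUnit (β x y))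
    (D : Set ℕ) :
    map topRow (LinearMap.ker (gridShift α β) ⊓
        span R ((Pi.single · (1 : R)) '' {p | (p.1 + p.2 : ℕ) ∈ D})) =
      span R ((Pi.single · (1 : R)) '' {x : Fin (e + 1) | (x + f : ℕ) ∈ D}) := by
  ext u
  simp only [mem_map, mem_inf, mem_ker_gridShift_iff hef hβ, mem_span_single_one_image_iff]
  constructor
  · rintro ⟨v, ⟨-, hv⟩, rfl⟩ x hx
    exact hv (x, Fin.last f) hx
  · intro hu
    have hrec : IsRowRecursive α β (extendTopRow α β u) := isRowRecursive_extendTopRow u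
    have htop : topRow (extendTopRow α β u) = u := topRow_extendTopRow u
    refine ⟨extendTopRow α β u, ⟨hrec, fun p => hrec.apply_eq_zero (fun x hx => ?_) p.1 p.2⟩, htop⟩
    rw [htop, hu x hx]

theorem finrank_ker_gridShift_inf_span [Nontrivial R] (hef : e ≤ f)
    (hβ : ∀ x y, IsUnit (β x y)) (D : Set ℕ) :
    finrank R ↥(LinearMap.ker (gridShift α β) ⊓
        span R ((Pi.single · (1 : R)) '' {p | (p.1 + p.2 : ℕ) ∈ D})) =
      {x : Fin (e + 1) | (x + f : ℕ) ∈ D}.ncard := by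
  rw [← finrank_span_single_one_image (R := R),
    ← map_topRow_ker_gridShift_inf_span (α := α) hef hβ D,
    finrank_map_eq_of_injOn ((injOn_topRow_ker_gridShift hef hβ).mono inf_le_left)]

end GridShift

theorem ncard_add_mod_eq {e f n i : ℕ} (hi : i < n) :
    {x : Fin (e + 1) | (x + f : ℕ) % n = i}.ncard =
      {j : ℤ | (f : ℤ) - e ≤ j ∧ j ≤ f ∧ (e : ℤ) + j ≡ i [ZMOD n]}.ncard := by
  have hinj : Function.Injective fun x : Fin (e + 1) => (x + f - e : ℤ) := fun x y h => by
    simpa [Fin.ext_iff] using h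
  have hmod (x : ℕ) : (x + f) % n = i ↔ ((x + f : ℕ) : ℤ) ≡ i [ZMOD n] := by
    rw [Int.natCast_modEq_iff, Nat.ModEq, Nat.mod_eq_of_lt hi]
  rw [← Set.ncard_image_of_injective _ hinj]
  congr 1
  ext j
  simp only [Set.mem_image, Set.mem_ofPred_eq, hmod]
  constructor
  · rintro ⟨x, hx, rfl⟩
    refine ⟨by omega, by omega, ?_⟩
    simpa using hx
  · rintro ⟨hlo, hhi, hj⟩
    have hcast : (((j + e - f).toNat + f : ℕ) : ℤ) = e + j := by omega
    exact ⟨⟨(j + e - f).toNat, by omega⟩, hcast ▸ hj, by simp only; omega⟩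

theorem stmt7_general {R : Type*} [CommRing R] [Nontrivial R] {e f : ℕ} (hef : e ≤ f)
    (α β : Fin (e + 1) → Fin (f + 1) → R) (hβ : ∀ x y, IsUnit (β x y))
    (T : (Fin (e + 1) × Fin (f + 1) → R) →ₗ[R] (Fin (e + 1) × Fin (f + 1) → R))
    (hT : ∀ (x : Fin (e + 1)) (y : Fin (f + 1)),
      T (Pi.single (x, y) 1) =
        (if hx : (x : ℕ) < e then
          α x y • (Pi.single ((⟨(x : ℕ) + 1, by omega⟩ : Fin (e + 1)), y) (1 : R) :
            (Fin (e + 1) × Fin (f + 1)) → R)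
        else 0) +
        (if hy : (y : ℕ) < f then
          β x y • (Pi.single (x, (⟨(y : ℕ) + 1, by omega⟩ : Fin (f + 1))) (1 : R) :
            (Fin (e + 1) × Fin (f + 1)) → R)
        else 0))
    {n i : ℕ} (hi : i < n) :
    finrank R ↥(LinearMap.ker T ⊓ span R {v | ∃ (x : Fin (e + 1)) (y : Fin (f + 1)),
        ((x : ℕ) + (y : ℕ)) % n = i ∧ v = Pi.single (x, y) (1 : R)}) =
      {j : ℤ | (f : ℤ) - e ≤ j ∧ j ≤ f ∧ (e : ℤ) + j ≡ i [ZMOD n]}.ncard := by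
  have hT_eq : T = gridShift α β := (Pi.basisFun R _).ext fun ⟨x, y⟩ => by
    rw [Pi.basisFun_apply, hT, gridShift_single]
  have hgens : {v | ∃ (x : Fin (e + 1)) (y : Fin (f + 1)),
        ((x : ℕ) + (y : ℕ)) % n = i ∧ v = Pi.single (x, y) (1 : R)} =
      (Pi.single · (1 : R)) '' {p | (p.1 + p.2 : ℕ) ∈ {m : ℕ | m % n = i}} := by
    ext v
    simp [eq_comm]
  rw [hT_eq, hgens, finrank_ker_gridShift_inf_span hef hβ]
  exact ncard_add_mod_eq hi

/-- Proposition 3.6: the dimension of `V'_i = (ker T) ∩ V_i` for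
`V = V(0,e) ⊗ V(0,f)` equals `#{j : f-e ≤ j ≤ f, e + j ≡ i (mod n)}`.
Here `V` is realized as the complex vector space with basis
`{v_x ⊗ v_y : 0 ≤ x ≤ e, 0 ≤ y ≤ f}`, i.e. `(Fin (e+1) × Fin (f+1)) → ℂ`
with standard basis `Pi.single (x,y) 1`. -/
theorem stmt7 (n : ℕ) (hn : 2 ≤ n) (𝕢 : ℂ) (h𝕢 : IsPrimitiveRoot 𝕢 n)
    (s : ℕ) (hs : s ≤ n - 1) (q : ℂ) (hq : q ^ n = 𝕢 ^ s)
    (d : ℕ) (hd : d = orderOf q)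
    (e f : ℕ) (hef : e ≤ f) (hf : (f : ℤ) ≤ (d : ℤ) - 1)
    (T : ((Fin (e + 1) × Fin (f + 1)) → ℂ) →ₗ[ℂ] ((Fin (e + 1) × Fin (f + 1)) → ℂ))
    (hT : ∀ (x : Fin (e + 1)) (y : Fin (f + 1)),
      T (Pi.single (x, y) 1) =
        (if hx : (x : ℕ) < e then
          (𝕢 ^ (-(s * (y : ℕ) : ℤ)) * q ^ (-((y : ℕ) : ℤ))) •
            (Pi.single ((⟨(x : ℕ) + 1, by omega⟩ : Fin (e + 1)), y) (1 : ℂ) :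
              (Fin (e + 1) × Fin (f + 1)) → ℂ)
        else 0) +
        (if hy : (y : ℕ) < f then
          (if (y : ℕ) % n = n - 1 then 𝕢 ^ (s * (x : ℕ)) else 1) •
            (Pi.single (x, (⟨(y : ℕ) + 1, by omega⟩ : Fin (f + 1))) (1 : ℂ) :
              (Fin (e + 1) × Fin (f + 1)) → ℂ)
        else 0))
    (i : ℕ) (hi : i ≤ n - 1)
    (Vi : Submodule ℂ ((Fin (e + 1) × Fin (f + 1)) → ℂ))
    (hVi : Vi = Submodule.span ℂ {v | ∃ (x : Fin (e + 1)) (y : Fin (f + 1)),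
        ((x : ℕ) + (y : ℕ)) % n = i ∧ v = Pi.single (x, y) (1 : ℂ)}) :
    Module.finrank ℂ ↥(LinearMap.ker T ⊓ Vi) =
      Set.ncard {j : ℤ | (f : ℤ) - (e : ℤ) ≤ j ∧ j ≤ (f : ℤ) ∧
        (e : ℤ) + j ≡ (i : ℤ) [ZMOD (n : ℤ)]} := by
  have h𝕢0 : 𝕢 ≠ 0 := h𝕢.ne_zero (by omega)
  exact hVi ▸ stmt7_general hef _ _ (fun x y => by split_ifs <;> simp [h𝕢0]) T hT (by omega)
end

section
/- Let n ≥ 1 be an integer and let e, f be integers with 0 ≤ e ≤ f. Write e = αn + e' with 0 ≤ e' ≤ n−1. For an integer j with 0 ≤ j ≤ n−1, set C_j = #{(k,l) ∈ ℤ×ℤ : 0 ≤ k ≤ e, 0 ≤ l ≤ f, k + l ≡ j (mod n)} and K_j = #{m ∈ ℤ : f−e ≤ m ≤ f, e + m ≡ j (mod n)}. For 0 ≤ i ≤ n−1 define S_i = C_i − C_{(i−1) mod n} + K_{(i−1) mod n}. Then S_i = α + 1 for 0 ≤ i ≤ e', and S_i = α for e' + 1 ≤ i ≤ n−1. -/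
/- Slice the box `[0, e] × [0, f]` into rows `y = const`. The row at height `y` contributes to `C_j`
the number of `x ∈ [0, e]` with `x ≡ j - y`, which depends only on `j - y`. Passing from `j = i - 1`
to `j = i` therefore moves every row up by one, so `C_i - C_{i-1}` telescopes to the bottom row for
`i` minus the row at height `f + 1` for `i`. The substitution `m = x + f - e` identifies that upper
row with `K_{i-1}`, and hence `S_i` is the number of `x ∈ [0, e]` with `x ≡ i`. -/

open Finset

theorem sum_Icc_add_apply_add_one {M : Type*} [AddCommMonoid M] (g : ℤ → M) {a b : ℤ}
    (hab : a ≤ b + 1) :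
    ∑ y ∈ Icc a b, g y + g (b + 1) = g a + ∑ y ∈ Icc a b, g (y + 1) := by
  have hshift : ∑ y ∈ Icc a b, g (y + 1) = ∑ y ∈ Icc (a + 1) (b + 1), g y := by
    rw [← map_add_right_Icc, sum_map]
    rfl
  rw [hshift, ← sum_insert (by simp), insert_Icc_add_one_left_eq_Icc hab,
    ← insert_Icc_right_eq_Icc_add_one hab, sum_insert (by simp), add_comm]

/-- The number of integers in `[0, e]` congruent to `k` modulo `n`; the row at height `y` of the box
counted by `Ncard n e f k` has `residueCount n e (k - y)` points. -/
noncomputable def residueCount (n e k : ℤ) : ℕ := #{x ∈ Icc 0 e | x ≡ k [ZMOD n]}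

theorem residueCount_congr {n j k : ℤ} (e : ℤ) (h : j ≡ k [ZMOD n]) :
    residueCount n e j = residueCount n e k := by
  have hiff (x : ℤ) : x ≡ j [ZMOD n] ↔ x ≡ k [ZMOD n] := ⟨(·.trans h), (·.trans h.symm)⟩
  simp only [residueCount, hiff]

theorem residueCount_eq_ediv_sub_ediv {n e : ℤ} (hn : 0 < n) (he : -1 ≤ e) (k : ℤ) :
    (residueCount n e k : ℤ) = (e - k) / n - (-1 - k) / n := by
  have hIcc : Icc 0 e = Ioc (-1) e := by ext; simp only [mem_Icc, mem_Ioc]; omega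
  have hfloor (a : ℤ) : ⌊((a : ℚ) - k) / n⌋ = (a - k) / n := by
    lift n to ℕ using hn.le
    exact_mod_cast Rat.floor_intCast_div_natCast (a - k) n
  have hmono : (-1 - k) / n ≤ (e - k) / n := Int.ediv_le_ediv hn (by omega)
  rw [residueCount, hIcc, Int.Ioc_filter_modEq_card _ _ hn, hfloor, hfloor,
    max_eq_left (sub_nonneg.mpr hmono)]

theorem residueCount_mul_add {n q r k : ℤ} (hqr : -1 ≤ q * n + r) (hr : 0 ≤ r) (hrn : r < n)
    (hk : 0 ≤ k) (hkn : k < n) :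
    (residueCount n (q * n + r) k : ℤ) = if k ≤ r then q + 1 else q := by
  have hn : 0 < n := by omega
  have hbot : (-1 - k) / n = -1 :=
    Int.ediv_eq_neg_one_of_neg_of_le (by omega) (by omega)
  have htop : (q * n + r - k) / n = q + (r - k) / n := by
    rw [add_sub_assoc, Int.mul_add_ediv_right _ _ hn.ne']
  rw [residueCount_eq_ediv_sub_ediv hn hqr, hbot, htop]
  split_ifs with hkr
  · rw [Int.ediv_eq_zero_of_lt (by omega) (by omega)]
    ring
  · rw [Int.ediv_eq_neg_one_of_neg_of_le (by omega) (by omega)]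
    ring

theorem Ncard_eq_sum_residueCount (n e f k : ℤ) :
    Ncard n e f k = ∑ y ∈ Icc 0 f, residueCount n e (k - y) := by
  have hset : {p : ℤ × ℤ | 0 ≤ p.1 ∧ p.1 ≤ e ∧ 0 ≤ p.2 ∧ p.2 ≤ f ∧ p.1 + p.2 ≡ k [ZMOD n]} =
      ({p ∈ Icc 0 e ×ˢ Icc 0 f | p.1 ≡ k - p.2 [ZMOD n]} : Finset (ℤ × ℤ)) := by
    ext p
    have hmod : p.1 + p.2 ≡ k [ZMOD n] ↔ p.1 ≡ k - p.2 [ZMOD n] := by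
      simp only [Int.modEq_iff_dvd, sub_sub, add_comm]
    simp [hmod, and_assoc]
  simp only [Ncard, hset, Set.ncard_coe_finset, residueCount, card_filter, sum_product_right]

theorem ncard_add_modEq_eq_residueCount (n e f k : ℤ) :
    Set.ncard {m : ℤ | f - e ≤ m ∧ m ≤ f ∧ e + m ≡ k [ZMOD n]} = residueCount n e (k - f) := by
  have himage : {m : ℤ | f - e ≤ m ∧ m ≤ f ∧ e + m ≡ k [ZMOD n]} =
      (· + (f - e)) '' {x | 0 ≤ x ∧ x ≤ e ∧ x ≡ k - f [ZMOD n]} := by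
    ext m
    have hlower : f - e ≤ m ↔ 0 ≤ m + (e - f) := by omega
    have hupper : m ≤ f ↔ m + (e - f) ≤ e := by omega
    have hmod : e + m ≡ k [ZMOD n] ↔ m + (e - f) ≡ k - f [ZMOD n] := by
      rw [Int.modEq_iff_dvd, Int.modEq_iff_dvd]
      ring_nf
    simp only [Set.image_add_right, Set.mem_preimage, Set.mem_ofPred_eq, neg_sub, hlower, hupper,
      hmod]
  rw [himage, Set.ncard_image_of_injective _ (add_left_injective _), residueCount,
    ← Set.ncard_coe_finset]
  simp [and_assoc]

theorem Ncard_add_residueCount {f : ℤ} (hf : -1 ≤ f) (n e k : ℤ) :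
    Ncard n e f k + residueCount n e (k - (f + 1)) =
      residueCount n e k + Ncard n e f (k - 1) := by
  have htelescope := sum_Icc_add_apply_add_one (fun y ↦ residueCount n e (k - y))
    (show 0 ≤ f + 1 by omega)
  simp only [sub_zero] at htelescope
  simp only [Ncard_eq_sum_residueCount, htelescope, sub_sub, add_comm]

theorem Ncard_emod (n e f k : ℤ) : Ncard n e f (k % n) = Ncard n e f k := by
  simp only [Ncard, Int.ModEq, Int.emod_emod]

theorem stmt8_general (n e f α e' : ℤ) (he0 : 0 ≤ e) (hf : 0 ≤ f)
    (he : e = α * n + e') (he'0 : 0 ≤ e') (he' : e' ≤ n - 1)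
    (C K S : ℤ → ℤ)
    (hC : ∀ j, C j = (Ncard n e f j : ℤ))
    (hK : ∀ j, K j = (Set.ncard {m : ℤ | f - e ≤ m ∧ m ≤ f ∧ e + m ≡ j [ZMOD n]} : ℤ))
    (hS : ∀ i, S i = C i - C ((i - 1) % n) + K ((i - 1) % n)) :
    (∀ i, 0 ≤ i → i ≤ e' → S i = α + 1) ∧
    (∀ i, e' + 1 ≤ i → i ≤ n - 1 → S i = α) := by
  have hS_eq (i : ℤ) : S i = residueCount n e i := by
    have hrow : residueCount n e ((i - 1) % n - f) = residueCount n e (i - (f + 1)) :=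
      residueCount_congr e (by
        simpa only [sub_sub, add_comm] using (Int.mod_modEq (i - 1) n).sub_right f)
    have htelescope := Ncard_add_residueCount (by omega : -1 ≤ f) n e i
    rw [hS, hC, hC, hK, Ncard_emod, ncard_add_modEq_eq_residueCount, hrow]
    omega
  have hcount (i : ℤ) (hi : 0 ≤ i) (hin : i < n) : S i = if i ≤ e' then α + 1 else α := by
    rw [hS_eq, he, residueCount_mul_add (by omega) he'0 (by omega) hi hin]
  refine ⟨fun i hi hie ↦ ?_, fun i hei hin ↦ ?_⟩
  · rw [hcount i hi (by omega), if_pos hie]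
  · rw [hcount i (by omega) (by omega), if_neg (by omega)]

theorem stmt8 (n e f α e' : ℤ) (hn : 1 ≤ n) (he0 : 0 ≤ e) (hef : e ≤ f)
    (he : e = α * n + e') (he'0 : 0 ≤ e') (he' : e' ≤ n - 1)
    (C K S : ℤ → ℤ)
    (hC : ∀ j, C j = (Ncard n e f j : ℤ))
    (hK : ∀ j, K j = (Set.ncard {m : ℤ | f - e ≤ m ∧ m ≤ f ∧ e + m ≡ j [ZMOD n]} : ℤ))
    (hS : ∀ i, S i = C i - C ((i - 1) % n) + K ((i - 1) % n)) :
    (∀ i, 0 ≤ i → i ≤ e' → S i = α + 1) ∧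
    (∀ i, e' + 1 ≤ i → i ≤ n - 1 → S i = α) :=
  stmt8_general n e f α e' he0 (he0.trans hef) he he'0 he' C K S hC hK hS
end

section
/- Let n ≥ 1 and d ≥ 1 be integers, let J be the ideal of ℤ[x,y] generated by x^n − 1 and (y − x − 1)·f_d(x,y), and let R = ℤ[x,y]/J. Let e, f be integers with 0 ≤ e ≤ f ≤ d−1 and e + f ≤ d−1. Then in R, the images satisfy f_{e+1}(x,y) · f_{f+1}(x,y) ≡ Σ_{k=0}^{e} x^k · f_{e+f+1−2k}(x,y) (mod J). -/
open MvPolynomial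

/-- The generalized Fibonacci polynomials in `ℤ[x,y]` (with `x = X 0`, `y = X 1`):
`f 1 = 1`, `f 2 = y`, and `f i = y * f (i-1) - x * f (i-2)` for `i > 2`. -/
noncomputable def genFib : ℕ → MvPolynomial (Fin 2) ℤ
  | 0 => 0
  | 1 => 1
  | (m + 2) => X 1 * genFib (m + 1) - X 0 * genFib m

theorem genFib_zero : genFib 0 = 0 := rfl

theorem genFib_one : genFib 1 = 1 := rfl

theorem genFib_add_two (m : ℕ) :
    genFib (m + 2) = X 1 * genFib (m + 1) - X 0 * genFib m := rfl

theorem genFib_add (a b : ℕ) :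
    genFib (a + b + 1) = genFib (a + 1) * genFib (b + 1) - X 0 * (genFib a * genFib b) := by
  induction a generalizing b with
  | zero => simp only [zero_add, genFib_zero, genFib_one, one_mul, zero_mul, mul_zero, sub_zero]
  | succ a ih =>
    calc genFib (a + 1 + b + 1)
        = genFib (a + (b + 1) + 1) := by rw [add_right_comm a 1 b, add_assoc a b 1]
      _ = genFib (a + 1) * genFib (b + 2) - X 0 * (genFib a * genFib (b + 1)) := ih (b + 1)
      _ = genFib (a + 2) * genFib (b + 1) - X 0 * (genFib (a + 1) * genFib b) := by
        rw [genFib_add_two a, genFib_add_two b]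
        ring

/-- The sum telescopes, because `genFib_add` turns each summand into a difference. -/
theorem stmt12_general (e f : ℕ) (hef : e ≤ f) :
    genFib (e + 1) * genFib (f + 1) =
      ∑ k ∈ Finset.range (e + 1), X 0 ^ k * genFib (e + f + 1 - 2 * k) := by
  let T (k : ℕ) := X 0 ^ k * (genFib (e + 1 - k) * genFib (f + 1 - k))
  have summand_eq_sub : ∀ k ∈ Finset.range (e + 1),
      X 0 ^ k * genFib (e + f + 1 - 2 * k) = T k - T (k + 1) := by
    intro k hk
    have hke : k ≤ e := Finset.mem_range_succ_iff.mp hk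
    have index_eq : e + f + 1 - 2 * k = (e - k) + (f - k) + 1 := by omega
    simp only [T, Nat.add_sub_add_right]
    rw [index_eq, genFib_add, Nat.sub_add_comm hke, Nat.sub_add_comm (hke.trans hef)]
    ring
  have T_zero : T 0 = genFib (e + 1) * genFib (f + 1) := by
    simp only [T, pow_zero, one_mul, Nat.sub_zero]
  have T_last : T (e + 1) = 0 := by
    simp only [T, Nat.sub_self, genFib_zero, zero_mul, mul_zero]
  rw [Finset.sum_congr rfl summand_eq_sub, Finset.sum_range_sub', T_zero, T_last, sub_zero]

/-- Clebsch-Gordan formula in the Green ring, case `e + f ≤ d - 1`: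
`f_{e+1} · f_{f+1} ≡ Σ_{k=0}^{e} x^k · f_{e+f+1-2k} (mod J)`. -/
theorem stmt12 (n d : ℕ) (hn : 1 ≤ n) (hd : 1 ≤ d)
    (J : Ideal (MvPolynomial (Fin 2) ℤ))
    (hJ : J = Ideal.span {X 0 ^ n - 1, (X 1 - X 0 - 1) * genFib d})
    (e f : ℕ) (hef : e ≤ f) (hfd : f + 1 ≤ d) (hsum : e + f + 1 ≤ d) :
    Ideal.Quotient.mk J (genFib (e + 1) * genFib (f + 1)) =
      Ideal.Quotient.mk J
        (∑ k ∈ Finset.range (e + 1), X 0 ^ k * genFib (e + f + 1 - 2 * k)) :=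
  congrArg (Ideal.Quotient.mk J) (stmt12_general e f hef)
end

section
/- Let n ≥ 1 and d ≥ 1 be integers, let J be the ideal of ℤ[x,y] generated by x^n − 1 and (y − x − 1)·f_d(x,y), and let R = ℤ[x,y]/J. Let e, f be integers with 0 ≤ e ≤ f ≤ d−1 and e + f ≥ d, and set γ = e + f − d + 1. Then in R, the images satisfy f_{e+1}(x,y) · f_{f+1}(x,y) ≡ Σ_{k=0}^{γ} x^k · f_d(x,y) + Σ_{l=γ+1}^{e} x^l · f_{e+f+1−2l}(x,y) (mod J), where the second sum is empty if γ ≥ e. -/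
open MvPolynomial

theorem genFib_dOcagne (m k : ℕ) :
    genFib (m + 1) * genFib (m + k) - genFib m * genFib (m + k + 1) = X 0 ^ m * genFib k := by
  induction m with
  | zero => simp [genFib]
  | succ m ih =>
    rw [add_right_comm m 1 k, genFib_add_two m, genFib_add_two (m + k)]
    linear_combination X 0 * ih

theorem genFib_mul_genFib_eq_add_sum {e f g h : ℕ} (hge : g ≤ e) (hef : e ≤ f + 1)
    (hsum : g + h = e + f) :
    genFib (e + 1) * genFib (f + 1) = genFib (g + 1) * genFib (h + 1) +
      ∑ l ∈ Finset.Icc (g + 1) e, X 0 ^ l * genFib (e + f + 1 - 2 * l) := by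
  induction e, hge using Nat.le_induction generalizing f with
  | base =>
    obtain rfl : h = f := Nat.add_left_cancel hsum
    simp
  | succ e hge ih =>
    obtain ⟨k, rfl⟩ : ∃ k, f = e + k := Nat.exists_eq_add_of_le (by lia)
    have last_index : e + 1 + (e + k) + 1 - 2 * (e + 1) = k := by lia
    have index_sum : e + (e + k + 1) = e + 1 + (e + k) := by lia
    have exchange := genFib_dOcagne (e + 1) k
    have telescoped := ih (f := e + k + 1) (by lia) (by lia)
    rw [index_sum] at telescoped
    rw [add_right_comm e 1 k] at exchange
    rw [Finset.sum_Icc_succ_top (by lia), last_index]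
    linear_combination exchange + telescoped

theorem dvd_genFib_sub_geom_sum (m : ℕ) :
    (X 1 - X 0 - 1 : MvPolynomial (Fin 2) ℤ) ∣ genFib m - ∑ k ∈ Finset.range m, X 0 ^ k := by
  induction m using Nat.twoStepInduction with
  | zero => simp [genFib]
  | one => simp [genFib]
  | more m ih ih_succ =>
    obtain ⟨a, ha⟩ := ih
    obtain ⟨b, hb⟩ := ih_succ
    refine ⟨genFib (m + 1) + (1 + X 0) * b - X 0 * a, ?_⟩
    rw [Finset.sum_range_succ] at hb
    rw [genFib_add_two, Finset.sum_range_succ, Finset.sum_range_succ]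
    linear_combination (1 + X 0) * hb - X 0 * ha

theorem stmt13_general {d e f γ : ℕ} {J : Ideal (MvPolynomial (Fin 2) ℤ)}
    (hJ : (X 1 - X 0 - 1) * genFib d ∈ J) (hef : e ≤ f) (hfd : f < d)
    (hγ : γ + d = e + f + 1) :
    Ideal.Quotient.mk J (genFib (e + 1) * genFib (f + 1)) =
      Ideal.Quotient.mk J
        (∑ k ∈ Finset.range (γ + 1), X 0 ^ k * genFib d +
         ∑ l ∈ Finset.Icc (γ + 1) e, X 0 ^ l * genFib (e + f + 1 - 2 * l)) := by
  obtain ⟨h, rfl⟩ : ∃ h, d = h + 1 := Nat.exists_eq_add_one.2 (by lia)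
  have product := genFib_mul_genFib_eq_add_sum (show γ ≤ e by lia) (show e ≤ f + 1 by lia)
    (show γ + h = e + f by lia)
  rw [Ideal.Quotient.eq, product, add_sub_add_right_eq_sub, ← Finset.sum_mul, ← sub_mul]
  exact J.mem_of_dvd (mul_dvd_mul_right (dvd_genFib_sub_geom_sum (γ + 1)) _) hJ

/-- Clebsch-Gordan formula in the Green ring, case `e + f ≥ d`, `γ = e + f - d + 1`:
`f_{e+1} · f_{f+1} ≡ Σ_{k=0}^{γ} x^k · f_d + Σ_{l=γ+1}^{e} x^l · f_{e+f+1-2l} (mod J)`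
(the second sum being empty if `γ ≥ e`). -/
theorem stmt13 (n d : ℕ) (hn : 1 ≤ n) (hd : 1 ≤ d)
    (J : Ideal (MvPolynomial (Fin 2) ℤ))
    (hJ : J = Ideal.span {X 0 ^ n - 1, (X 1 - X 0 - 1) * genFib d})
    (e f γ : ℕ) (hef : e ≤ f) (hfd : f + 1 ≤ d) (hsum : d ≤ e + f)
    (hγ : γ = e + f + 1 - d) :
    Ideal.Quotient.mk J (genFib (e + 1) * genFib (f + 1)) =
      Ideal.Quotient.mk J
        (∑ k ∈ Finset.range (γ + 1), X 0 ^ k * genFib d +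
         ∑ l ∈ Finset.Icc (γ + 1) e, X 0 ^ l * genFib (e + f + 1 - 2 * l)) := by
  subst hJ
  exact stmt13_general (Ideal.subset_span (by simp)) hef hfd (by lia)
end
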